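/- arXiv:2407.08419 — 2 statements merged into one kernel-verified Lean document; each statement's English description precedes it below -/
import Mathlib

section
/- Let n ≥ 1, let S = ℂ[x_1,…,x_n], let L be the fraction field of S, let G be a finite subgroup of GL_n(ℂ), and let φ_1,…,φ_n ∈ S each be G-invariant with det(J_φ) ≠ 0. Then L is generated as a field extension of the fixed field L^G by the n² entries of J_φ; that is, the intermediate field of L/L^G generated by the entries of J_φ equals all of L. -/
open MvPolynomial

noncomputable abbrev polyS (n : ℕ) := MvPolynomial (Fin n) ℂ
noncomputable abbrev fracL (n : ℕ) := FractionRing (polyS n)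
noncomputable abbrev toL (n : ℕ) : polyS n →+* fracL n := algebraMap (polyS n) (fracL n)

/-- The action of `M ∈ GL_n(ℂ)` on polynomials: `γ_M(f)(x) = f(x · M⁻ᵀ)`,
i.e. the variable `x_i` is substituted by `∑_k (M⁻¹)_{i k} · x_k`. -/
noncomputable def gammaAct (n : ℕ) (M : GL (Fin n) ℂ) : polyS n →ₐ[ℂ] polyS n :=
  MvPolynomial.aeval (fun i => ∑ k, MvPolynomial.C (((M⁻¹ : GL (Fin n) ℂ) :
    Matrix (Fin n) (Fin n) ℂ) i k) * MvPolynomial.X k)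

/-- The Jacobian matrix of an `n`-tuple of polynomials: `(i,j)` entry `∂φ_i/∂x_j`. -/
noncomputable def jacMat {n : ℕ} (φ : Fin n → polyS n) : Matrix (Fin n) (Fin n) (polyS n) :=
  Matrix.of fun i j => MvPolynomial.pderiv j (φ i)

/-!
Differentiating `γ_M(φ) = φ` by the chain rule gives `J_φ = γ_M(J_φ) · M⁻¹`. So if `M ∈ G` also
fixes every entry of `J_φ`, then `J_φ = J_φ · M⁻¹`, and cancelling `J_φ` gives `M = 1`. Hence no
nontrivial element of `G`, which is the Galois group of `L / L^G` by Artin's theorem, fixes the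
entries of `J_φ`, and the Galois correspondence shows that they generate `L` over `L^G`.
-/

section Galois

variable {G K L : Type*} [Group G] [Finite G] [Field K] [Field L] [Algebra K L]
  [MulSemiringAction G L] {T : Set L}

theorem adjoin_eq_top_of_fixingSubgroup_eq_bot [IsGaloisGroup G K L]
    (hT : fixingSubgroup G T = ⊥) : IntermediateField.adjoin K T = ⊤ := by
  have fixing_adjoin : fixingSubgroup G (IntermediateField.adjoin K T : Set L) = ⊥ :=
    le_bot_iff.mp <| hT ▸ fixingSubgroup_antitone G L (IntermediateField.subset_adjoin K T)
  rw [← IsGaloisGroup.fixedPoints_fixingSubgroup G K L (IntermediateField.adjoin K T),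
    fixing_adjoin, IsGaloisGroup.fixedPoints_bot]

theorem closure_fixedPoints_union_eq_top_of_fixingSubgroup_eq_bot
    (hT : fixingSubgroup G T = ⊥) :
    Subfield.closure (MulAction.fixedPoints G L ∪ T) = ⊤ := by
  have : FaithfulSMul G L := faithfulSMul_iff.mpr fun g hg =>
    (Subgroup.eq_bot_iff_forall _).mp hT g <| (mem_fixingSubgroup_iff G).mpr fun a _ => hg a
  have adjoin_eq_top : IntermediateField.adjoin (FixedPoints.subfield G L) T = ⊤ :=
    adjoin_eq_top_of_fixingSubgroup_eq_bot hT
  have range_eq : Set.range (algebraMap (FixedPoints.subfield G L) L) =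
      MulAction.fixedPoints G L := Subtype.range_coe
  rw [← range_eq, ← IntermediateField.adjoin_toSubfield, adjoin_eq_top,
    IntermediateField.top_toSubfield]

end Galois

theorem derivation_aeval {R ι A M : Type*} [Fintype ι] [CommSemiring R] [CommSemiring A]
    [AddCommMonoid M] [Algebra R A] [Module R M] [Module A M] (D : Derivation R A M)
    (f : ι → A) (p : MvPolynomial ι R) :
    D (aeval f p) = ∑ k, aeval f (pderiv k p) • D (f k) := by
  classical
  induction p using MvPolynomial.induction_on with
  | C a => simp
  | add p q hp hq => simp only [map_add, hp, hq, add_smul, Finset.sum_add_distrib]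
  | mul_X p i hp =>
    simp only [map_mul, map_add, aeval_X, Derivation.leibniz, hp, pderiv_X, smul_eq_mul,
      add_smul, mul_smul, Finset.sum_add_distrib, Finset.smul_sum, Pi.single_apply]
    simp

section Jacobian

variable {ι κ τ R : Type*} [CommSemiring R]

/-- The Jacobian matrix `(∂φᵢ/∂xⱼ)` of a family of polynomials. The family may have any index
type, so the matrix need not be square. -/
noncomputable def jacobianMatrix (φ : κ → MvPolynomial ι R) :
    Matrix κ ι (MvPolynomial ι R) :=
  Matrix.of fun i j => pderiv j (φ i)

theorem jacobianMatrix_bind₁ [Fintype ι] (f : ι → MvPolynomial τ R)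
    (φ : κ → MvPolynomial ι R) :
    jacobianMatrix (fun i => bind₁ f (φ i)) =
      (jacobianMatrix φ).map (bind₁ f) * jacobianMatrix f := by
  ext1 i j
  exact derivation_aeval (pderiv j) f (φ i)

theorem jacobianMatrix_toMvPolynomial [Fintype ι] (A : Matrix κ ι R) :
    jacobianMatrix A.toMvPolynomial = A.map C := by
  classical
  ext1 i j
  simp [jacobianMatrix, Matrix.toMvPolynomial, ← C_mul_X_eq_monomial, pderiv_X, Pi.single_apply]

theorem eq_one_of_bind₁_toMvPolynomial_fixes_jacobianMatrix [Fintype ι] [DecidableEq ι]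
    {φ : κ → MvPolynomial ι R}
    (hJ : Function.Injective (jacobianMatrix φ).mulVec) {A : Matrix ι ι R}
    (hφ : ∀ i, bind₁ A.toMvPolynomial (φ i) = φ i)
    (hJφ : ∀ i j, bind₁ A.toMvPolynomial (jacobianMatrix φ i j) = jacobianMatrix φ i j) :
    A = 1 := by
  have map_jacobian : (jacobianMatrix φ).map (bind₁ A.toMvPolynomial) = jacobianMatrix φ :=
    Matrix.ext hJφ
  have mul_eq_self : jacobianMatrix φ * jacobianMatrix A.toMvPolynomial = jacobianMatrix φ :=
    calc jacobianMatrix φ * jacobianMatrix A.toMvPolynomial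
        = jacobianMatrix fun i => bind₁ A.toMvPolynomial (φ i) := by
          rw [jacobianMatrix_bind₁, map_jacobian]
      _ = jacobianMatrix φ := by rw [funext hφ]
  have jacobian_eq_one : jacobianMatrix A.toMvPolynomial = 1 := by
    cases isEmpty_or_nonempty ι
    · exact Subsingleton.elim _ _
    · exact Matrix.mul_right_injective_iff_mulVec_injective.mpr hJ
        (mul_eq_self.trans (Matrix.mul_one _).symm)
  rw [jacobianMatrix_toMvPolynomial, ← Matrix.map_one C C_0 C_1] at jacobian_eq_one
  exact Matrix.map_injective (C_injective ι R) jacobian_eq_one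

end Jacobian

section LinearAction

variable {ι R : Type*} [Fintype ι] [DecidableEq ι] [CommRing R]

/-- The substitution `γ_M` over an arbitrary commutative ring: `xᵢ` is replaced by the `i`-th entry
of `M⁻¹ x`. The inverse makes `M ↦ γ_M` a left action. -/
noncomputable def linearAct (M : GL ι R) : MvPolynomial ι R →ₐ[R] MvPolynomial ι R :=
  bind₁ (M⁻¹ : GL ι R).val.toMvPolynomial

theorem linearAct_mul (M N : GL ι R) (f : MvPolynomial ι R) :
    linearAct (M * N) f = linearAct M (linearAct N f) := by
  simp only [linearAct, bind₁_bind₁, mul_inv_rev, Units.val_mul, ← Matrix.toMvPolynomial_mul]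

theorem eq_one_of_linearAct_fixes_jacobianMatrix {κ : Type*} {φ : κ → MvPolynomial ι R}
    (hJ : Function.Injective (jacobianMatrix φ).mulVec) {M : GL ι R}
    (hφ : ∀ i, linearAct M (φ i) = φ i)
    (hJφ : ∀ i j, linearAct M (jacobianMatrix φ i j) = jacobianMatrix φ i j) : M = 1 :=
  inv_eq_one.mp <| Units.ext <| eq_one_of_bind₁_toMvPolynomial_fixes_jacobianMatrix hJ hφ hJφ

theorem map_mul_of_extends_linearAct {L : Type*} [CommRing L] [Algebra (MvPolynomial ι R) L]
    [IsFractionRing (MvPolynomial ι R) L] {σ : GL ι R → L ≃+* L}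
    (hσ : ∀ M f, σ M (algebraMap _ L f) = algebraMap _ L (linearAct M f)) (M N : GL ι R) :
    σ (M * N) = σ M * σ N := by
  have : (σ (M * N)).toRingHom = (σ M * σ N).toRingHom :=
    IsLocalization.ringHom_ext (nonZeroDivisors (MvPolynomial ι R)) <| RingHom.ext fun f => by
      simp [hσ, linearAct_mul]
  exact RingEquiv.toRingHom_injective this

end LinearAction

theorem stmt7_general {ι κ R L : Type*} [Fintype ι] [DecidableEq ι] [CommRing R] [Field L]
    [Algebra (MvPolynomial ι R) L] [IsFractionRing (MvPolynomial ι R) L]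
    (G : Subgroup (GL ι R)) [Finite G] (φ : κ → MvPolynomial ι R)
    (hinv : ∀ i, ∀ M ∈ G, linearAct M (φ i) = φ i)
    (hJ : Function.Injective (jacobianMatrix φ).mulVec) (σ : GL ι R → L ≃+* L)
    (hσ : ∀ M f, σ M (algebraMap _ L f) = algebraMap _ L (linearAct M f)) :
    Subfield.closure ({a : L | ∀ M ∈ G, σ M a = a} ∪
      Set.range fun p : κ × ι => algebraMap _ L (jacobianMatrix φ p.1 p.2)) = ⊤ := by
  let ρ : G →* (L ≃+* L) :=
    MonoidHom.mk' (fun g => σ g) fun g h => map_mul_of_extends_linearAct hσ g h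
  let _ : MulSemiringAction G L := MulSemiringAction.compHom L ρ
  have smul_eq (g : G) (a : L) : g • a = σ g a := rfl
  have fixedPoints_eq : MulAction.fixedPoints G L = {a : L | ∀ M ∈ G, σ M a = a} := by
    ext a
    simp only [MulAction.mem_fixedPoints, smul_eq, Subtype.forall, Set.mem_ofPred_eq]
  rw [← fixedPoints_eq]
  refine closure_fixedPoints_union_eq_top_of_fixingSubgroup_eq_bot <|
    (Subgroup.eq_bot_iff_forall _).mpr fun g hg => Subtype.ext ?_
  refine eq_one_of_linearAct_fixes_jacobianMatrix hJ (fun i => hinv i g g.2) fun i j => ?_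
  apply IsFractionRing.injective (MvPolynomial ι R) L
  rw [← hσ, ← smul_eq]
  exact (mem_fixingSubgroup_iff G).mp hg _ ⟨(i, j), rfl⟩

theorem gammaAct_eq_linearAct (n : ℕ) (M : GL (Fin n) ℂ) : gammaAct n M = linearAct M := by
  simp only [gammaAct, linearAct, bind₁, C_mul_X_eq_monomial]
  rfl

theorem stmt7 (n : ℕ) (hn : 1 ≤ n) (G : Subgroup (GL (Fin n) ℂ)) (hGfin : Finite G)
    (φ : Fin n → polyS n)
    (hinv : ∀ i, ∀ M ∈ G, gammaAct n M (φ i) = φ i)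
    (hdet : (jacMat φ).det ≠ 0)
    -- the extension of the action on `S` to field automorphisms of `L`
    (σ : GL (Fin n) ℂ → (fracL n ≃ₐ[ℂ] fracL n))
    (hσ : ∀ M : GL (Fin n) ℂ, ∀ f : polyS n, σ M (toL n f) = toL n (gammaAct n M f)) :
    -- the subfield of `L` generated by the fixed field `L^G` together with
    -- the entries of the Jacobian matrix is all of `L`
    Subfield.closure ({a : fracL n | ∀ M ∈ G, σ M a = a} ∪
      Set.range (fun p : Fin n × Fin n => toL n (jacMat φ p.1 p.2))) = ⊤ := by
  simp only [gammaAct_eq_linearAct] at hinv hσ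
  exact stmt7_general G φ hinv (Matrix.mulVec_injective_of_det_ne_zero hdet)
    (fun M => (σ M).toRingEquiv) hσ
end

section
/- Let S = ℂ[x_1,x_2], let L = ℂ(x_1,x_2) be its fraction field, let φ_1 = x_1² + x_2², φ_2 = x_1²x_2², and let J = [[2x_1, 2x_2],[2x_1x_2², 2x_1²x_2]] be the Jacobian matrix of (φ_1,φ_2), viewed over L. Define D_2 : S → L by D_2(p) = (∂p/∂x_2)/(2x_2(x_1² − x_2²)) − (∂p/∂x_1)/(2x_1(x_1² − x_2²)), applied entrywise to J. Then det(J) ≠ 0, and (D_2 J)·J^{-1} = (2(φ_1² − 4φ_2))^{-1}·[[−2, φ_1·φ_2^{-1}],[φ_1, φ_1²·φ_2^{-1} − 6]] as 2×2 matrices over L. -/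
open MvPolynomial

noncomputable abbrev polyS2 := MvPolynomial (Fin 2) ℂ
noncomputable abbrev fracL2 := FractionRing polyS2
noncomputable abbrev toL2 : polyS2 →+* fracL2 := algebraMap polyS2 fracL2

/-- The image of the variable `x₁` in `L`. -/
noncomputable def x₁ : fracL2 := toL2 (MvPolynomial.X 0)
/-- The image of the variable `x₂` in `L`. -/
noncomputable def x₂ : fracL2 := toL2 (MvPolynomial.X 1)

/-- `D₂(p) = (∂p/∂x₂)/(2x₂(x₁² − x₂²)) − (∂p/∂x₁)/(2x₁(x₁² − x₂²))`. -/
noncomputable def D₂ (p : polyS2) : fracL2 :=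
  toL2 (MvPolynomial.pderiv 1 p) / (2 * x₂ * (x₁ ^ 2 - x₂ ^ 2)) -
    toL2 (MvPolynomial.pderiv 0 p) / (2 * x₁ * (x₁ ^ 2 - x₂ ^ 2))

/-- The Jacobian matrix of `(φ₁, φ₂) = (x₁² + x₂², x₁²x₂²)` over `S`. -/
noncomputable def Jdih : Matrix (Fin 2) (Fin 2) polyS2 :=
  !![2 * MvPolynomial.X 0, 2 * MvPolynomial.X 1;
     2 * MvPolynomial.X 0 * MvPolynomial.X 1 ^ 2, 2 * MvPolynomial.X 0 ^ 2 * MvPolynomial.X 1]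

/-!
The derivation `D₂` is `∂/∂φ₂`: it is determined by `D₂ φ₁ = 0` and `D₂ φ₂ = 1`. By the chain rule
these are two linear equations for `α = D₂ x₁` and `β = D₂ x₂`, whose solution satisfies
`2 x₁ (x₁² - x₂²) α = -1` and `2 x₂ (x₁² - x₂²) β = 1`. Hence `det J = 4 x₁ x₂ (x₁² - x₂²)` is
nonzero, and `D₂ J`, whose entries are linear in `α` and `β`, can be compared with the product
of the claimed matrix and `J`. The denominators match since `φ₁² - 4 φ₂ = (x₁² - x₂²)²`.
-/

section CommRing

variable {R : Type*} [CommRing R]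

/-- The Jacobian matrix of `(x² + y², x²y²)`, evaluated at the point `(a, b)`. -/
def dihedralJacobian (a b : R) : Matrix (Fin 2) (Fin 2) R :=
  !![2 * a, 2 * b; 2 * a * b ^ 2, 2 * a ^ 2 * b]

theorem det_dihedralJacobian (a b : R) :
    (dihedralJacobian a b).det = (2 * a) * (2 * b) * (a ^ 2 - b ^ 2) := by
  rw [dihedralJacobian, Matrix.det_fin_two_of]
  ring

theorem dihedralJacobian_map {R' : Type*} [CommRing R'] (f : R →+* R') (a b : R) :
    (dihedralJacobian a b).map f = dihedralJacobian (f a) (f b) := by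
  ext i j
  fin_cases i <;> fin_cases j <;> simp [dihedralJacobian, map_ofNat f 2]

theorem two_mul_mul_sq_sub_sq_mul_eq_neg_one {a b α β : R} (h₀ : 2 * a * α + 2 * b * β = 0)
    (h₁ : 2 * a * b ^ 2 * α + 2 * a ^ 2 * b * β = 1) :
    2 * a * (a ^ 2 - b ^ 2) * α = -1 := by
  linear_combination a ^ 2 * h₀ - h₁

theorem two_mul_mul_sq_sub_sq_mul_eq_one {a b α β : R} (h₀ : 2 * a * α + 2 * b * β = 0)
    (h₁ : 2 * a * b ^ 2 * α + 2 * a ^ 2 * b * β = 1) :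
    2 * b * (a ^ 2 - b ^ 2) * β = 1 := by
  linear_combination h₁ - b ^ 2 * h₀

end CommRing

section Field

variable {K : Type*} [Field K]

/-- The matrix by which `∂/∂φ₂` acts on the Jacobian matrix of `(φ₁, φ₂) = (x² + y², x²y²)`,
written in terms of the values `u` of `φ₁` and `v` of `φ₂`. -/
def dihedralConnection (u v : K) : Matrix (Fin 2) (Fin 2) K :=
  (2 * (u ^ 2 - 4 * v))⁻¹ • !![-2, u * v⁻¹; u, u ^ 2 * v⁻¹ - 6]

theorem det_dihedralJacobian_ne_zero {a b α β : K} (hα : 2 * a * (a ^ 2 - b ^ 2) * α = -1)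
    (hβ : 2 * b * (a ^ 2 - b ^ 2) * β = 1) : (dihedralJacobian a b).det ≠ 0 := by
  have ha : 2 * a * (a ^ 2 - b ^ 2) ≠ 0 := left_ne_zero_of_mul (hα ▸ neg_ne_zero.mpr one_ne_zero)
  have hb : 2 * b * (a ^ 2 - b ^ 2) ≠ 0 := left_ne_zero_of_mul_eq_one hβ
  rw [det_dihedralJacobian, mul_assoc]
  exact mul_ne_zero (left_ne_zero_of_mul ha) hb

theorem dihedralConnection_mul_dihedralJacobian {a b α β : K}
    (hα : 2 * a * (a ^ 2 - b ^ 2) * α = -1) (hβ : 2 * b * (a ^ 2 - b ^ 2) * β = 1) :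
    dihedralConnection (a ^ 2 + b ^ 2) (a ^ 2 * b ^ 2) * dihedralJacobian a b =
      !![2 * α, 2 * β;
         2 * b ^ 2 * α + 4 * a * b * β, 4 * a * b * α + 2 * a ^ 2 * β] := by
  obtain ⟨⟨⟨two_ne, ha⟩, -, hb⟩, hd⟩ :
      (((2 : K) ≠ 0 ∧ a ≠ 0) ∧ (2 : K) ≠ 0 ∧ b ≠ 0) ∧ a ^ 2 - b ^ 2 ≠ 0 := by
    simpa only [det_dihedralJacobian, mul_ne_zero_iff] using det_dihedralJacobian_ne_zero hα hβ
  have α_eq : α = -1 / (2 * a * (a ^ 2 - b ^ 2)) :=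
    eq_div_of_mul_eq (mul_ne_zero (mul_ne_zero two_ne ha) hd) (by rw [mul_comm, hα])
  have β_eq : β = 1 / (2 * b * (a ^ 2 - b ^ 2)) :=
    eq_div_of_mul_eq (mul_ne_zero (mul_ne_zero two_ne hb) hd) (by rw [mul_comm, hβ])
  have discriminant : (a ^ 2 + b ^ 2) ^ 2 - 4 * (a ^ 2 * b ^ 2) = (a ^ 2 - b ^ 2) ^ 2 := by ring
  rw [α_eq, β_eq, dihedralConnection, dihedralJacobian, discriminant, Matrix.smul_mul,
    Matrix.mul_fin_two, Matrix.smul_of]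
  ext i j
  fin_cases i <;> fin_cases j <;> dsimp <;> field_simp <;> ring

end Field

section Derivation

variable {R A K : Type*} [CommSemiring R] [CommRing A] [Algebra R A] [CommRing K] [Algebra A K]
  [Module R K]

theorem derivation_two_mul (D : Derivation R A K) (a : A) : D (2 * a) = 2 * D a := by
  rw [two_mul, map_add, two_mul]

theorem derivation_sq (D : Derivation R A K) (a : A) :
    D (a ^ 2) = 2 * algebraMap A K a * D a := by
  rw [sq, Derivation.leibniz, Algebra.smul_def]
  ring

theorem derivation_sq_add_sq (D : Derivation R A K) (a b : A) :
    D (a ^ 2 + b ^ 2) = 2 * algebraMap A K a * D a + 2 * algebraMap A K b * D b := by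
  rw [map_add, derivation_sq, derivation_sq]

theorem derivation_sq_mul_sq (D : Derivation R A K) (a b : A) :
    D (a ^ 2 * b ^ 2) = 2 * algebraMap A K a * algebraMap A K b ^ 2 * D a +
      2 * algebraMap A K a ^ 2 * algebraMap A K b * D b := by
  rw [Derivation.leibniz, derivation_sq, derivation_sq, Algebra.smul_def, Algebra.smul_def,
    map_pow, map_pow]
  ring

theorem dihedralJacobian_map_derivation (D : Derivation R A K) (a b : A) :
    (dihedralJacobian a b).map D =
      !![2 * D a, 2 * D b;
         2 * algebraMap A K b ^ 2 * D a + 4 * algebraMap A K a * algebraMap A K b * D b,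
         4 * algebraMap A K a * algebraMap A K b * D a + 2 * algebraMap A K a ^ 2 * D b] := by
  ext i j
  fin_cases i <;> fin_cases j <;> dsimp [dihedralJacobian] <;>
    simp only [mul_assoc (2 : A), derivation_two_mul] <;>
    simp only [Derivation.leibniz, derivation_sq, Algebra.smul_def, map_pow] <;>
    ring

end Derivation

theorem stmt19_general {R A K : Type*} [CommSemiring R] [CommRing A] [Algebra R A] [Field K]
    [Algebra A K] [Module R K] (D : Derivation R A K) {a b φ₁ φ₂ : A}
    (hφ₁ : φ₁ = a ^ 2 + b ^ 2) (hφ₂ : φ₂ = a ^ 2 * b ^ 2) (hD₁ : D φ₁ = 0) (hD₂ : D φ₂ = 1) :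
    ((dihedralJacobian a b).map (algebraMap A K)).det ≠ 0 ∧
      (dihedralJacobian a b).map D * ((dihedralJacobian a b).map (algebraMap A K))⁻¹ =
        dihedralConnection (algebraMap A K φ₁) (algebraMap A K φ₂) := by
  subst hφ₁ hφ₂
  rw [derivation_sq_add_sq] at hD₁
  rw [derivation_sq_mul_sq] at hD₂
  have hDa := two_mul_mul_sq_sub_sq_mul_eq_neg_one hD₁ hD₂
  have hDb := two_mul_mul_sq_sub_sq_mul_eq_one hD₁ hD₂
  have det_ne_zero := det_dihedralJacobian_ne_zero hDa hDb
  rw [dihedralJacobian_map]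
  refine ⟨det_ne_zero, ?_⟩
  rw [dihedralJacobian_map_derivation, ← dihedralConnection_mul_dihedralJacobian hDa hDb,
    Matrix.mul_nonsing_inv_cancel_right _ _ det_ne_zero.isUnit]
  simp only [map_add, map_mul, map_pow]

/-- `D₂` as a derivation from `S` to the `S`-module `L`. -/
noncomputable def D₂Derivation : Derivation ℂ polyS2 fracL2 :=
  (2 * x₂ * (x₁ ^ 2 - x₂ ^ 2))⁻¹ • (Algebra.linearMap polyS2 fracL2).compDer (pderiv 1) -
    (2 * x₁ * (x₁ ^ 2 - x₂ ^ 2))⁻¹ • (Algebra.linearMap polyS2 fracL2).compDer (pderiv 0)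

theorem D₂Derivation_apply (p : polyS2) : D₂Derivation p = D₂ p := by
  simp [D₂Derivation, D₂, div_eq_inv_mul]

theorem x₁_ne_zero : x₁ ≠ 0 :=
  (map_ne_zero_iff _ (IsFractionRing.injective polyS2 fracL2)).mpr (X_ne_zero 0)

theorem x₂_ne_zero : x₂ ≠ 0 :=
  (map_ne_zero_iff _ (IsFractionRing.injective polyS2 fracL2)).mpr (X_ne_zero 1)

theorem x₁_sq_sub_x₂_sq_ne_zero : x₁ ^ 2 - x₂ ^ 2 ≠ 0 := by
  have polynomial_ne_zero : (X 0 ^ 2 - X 1 ^ 2 : polyS2) ≠ 0 := fun h => by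
    simpa using congrArg (eval ![(1 : ℂ), 0]) h
  simpa only [x₁, x₂, map_sub, map_pow] using
    (map_ne_zero_iff toL2 (IsFractionRing.injective polyS2 fracL2)).mpr polynomial_ne_zero

theorem D₂_X_zero : D₂ (X 0) = -(2 * x₁ * (x₁ ^ 2 - x₂ ^ 2))⁻¹ := by
  simp [D₂, pderiv_X]

theorem D₂_X_one : D₂ (X 1) = (2 * x₂ * (x₁ ^ 2 - x₂ ^ 2))⁻¹ := by
  simp [D₂, pderiv_X]

theorem D₂Derivation_sq_add_sq : D₂Derivation (X 0 ^ 2 + X 1 ^ 2) = 0 := by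
  rw [derivation_sq_add_sq, D₂Derivation_apply, D₂Derivation_apply, D₂_X_zero, D₂_X_one]
  change 2 * x₁ * _ + 2 * x₂ * _ = 0
  field_simp [x₁_ne_zero, x₂_ne_zero, x₁_sq_sub_x₂_sq_ne_zero]
  ring

theorem D₂Derivation_sq_mul_sq : D₂Derivation (X 0 ^ 2 * X 1 ^ 2) = 1 := by
  rw [derivation_sq_mul_sq, D₂Derivation_apply, D₂Derivation_apply, D₂_X_zero, D₂_X_one]
  change 2 * x₁ * x₂ ^ 2 * _ + 2 * x₁ ^ 2 * x₂ * _ = 1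
  field_simp [x₁_ne_zero, x₂_ne_zero, x₁_sq_sub_x₂_sq_ne_zero]
  ring

theorem stmt19 (φ₁ φ₂ : polyS2)
    (hφ₁ : φ₁ = MvPolynomial.X 0 ^ 2 + MvPolynomial.X 1 ^ 2)
    (hφ₂ : φ₂ = MvPolynomial.X 0 ^ 2 * MvPolynomial.X 1 ^ 2) :
    (Jdih.map toL2).det ≠ 0 ∧
    (Matrix.of fun i j => D₂ (Jdih i j)) * (Jdih.map toL2)⁻¹ =
      (2 * (toL2 φ₁ ^ 2 - 4 * toL2 φ₂))⁻¹ •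
        !![-2, toL2 φ₁ * (toL2 φ₂)⁻¹;
           toL2 φ₁, toL2 φ₁ ^ 2 * (toL2 φ₂)⁻¹ - 6] := by
  simp only [← D₂Derivation_apply]
  exact stmt19_general D₂Derivation hφ₁ hφ₂ (hφ₁ ▸ D₂Derivation_sq_add_sq)
    (hφ₂ ▸ D₂Derivation_sq_mul_sq)
end
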